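/- Let H ∈ (0, 1/2). There exists a positive constant C, depending only on H, such that for every T ≥ 1, ∫∫∫_{0<r<s<t<T} min(1, r^(2H−2)) · min(1, s^(2H−2)) · min(1, (t−r)^(H−1)) dr ds dt ≤ C · T^H. -/

import Mathlib

/-!
On the simplex `0 < r < s < t < T` the gap `u = t - r` lies in `(0, T)`, and `(r, s, t) ↦ (r, s, u)`
preserves Lebesgue measure. Keeping only `0 < r`, `0 < s` and `0 < u < T` enlarges the domain to a
box in the new coordinates, over which the nonnegative integrand factorizes. The factors in `r` and
`s` have finite integral over `(0, ∞)` because their exponents are below `-1`, and the factor in `u`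
contributes `∫₀ᵀ u ^ (H - 1) du = T ^ H / H`.
-/

open MeasureTheory Real Set

section TruncatedPower

variable {a b x T : ℝ}

theorem min_one_rpow_nonneg (a : ℝ) (hx : 0 < x) : 0 ≤ min 1 (x ^ a) := by positivity

theorem eqOn_min_one_rpow_Ioc (ha : a ≤ 0) : EqOn (fun x : ℝ ↦ min 1 (x ^ a)) 1 (Ioc 0 1) :=
  fun _ hx ↦ min_eq_left (one_le_rpow_of_pos_of_le_one_of_nonpos hx.1 hx.2 ha)

theorem eqOn_min_one_rpow_Ioi (ha : a ≤ 0) :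
    EqOn (fun x : ℝ ↦ min 1 (x ^ a)) (fun x ↦ x ^ a) (Ioi 1) :=
  fun _ hx ↦ min_eq_right (rpow_le_one_of_one_le_of_nonpos (le_of_lt hx) ha)

theorem integrableOn_Ioc_min_one_rpow (a T : ℝ) :
    IntegrableOn (fun x : ℝ ↦ min 1 (x ^ a)) (Ioc 0 T) := by
  refine Measure.integrableOn_of_bounded (M := 1) (by simp) (by fun_prop) ?_
  filter_upwards [ae_restrict_mem measurableSet_Ioc] with x hx
  rw [norm_of_nonneg (min_one_rpow_nonneg a hx.1)]
  exact min_le_left _ _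

theorem integrableOn_Ioi_one_min_one_rpow (ha : a < -1) :
    IntegrableOn (fun x : ℝ ↦ min 1 (x ^ a)) (Ioi 1) :=
  (integrableOn_Ioi_rpow_of_lt ha one_pos).congr_fun
    (eqOn_min_one_rpow_Ioi (by linarith)).symm measurableSet_Ioi

theorem integrableOn_Ioi_min_one_rpow (ha : a < -1) :
    IntegrableOn (fun x : ℝ ↦ min 1 (x ^ a)) (Ioi 0) := by
  rw [← Ioc_union_Ioi_eq_Ioi zero_le_one]
  exact (integrableOn_Ioc_min_one_rpow a 1).union (integrableOn_Ioi_one_min_one_rpow ha)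

theorem integral_Ioi_min_one_rpow (ha : a < -1) :
    ∫ x in Ioi (0 : ℝ), min 1 (x ^ a) = a / (a + 1) := by
  have head : ∫ x in Ioc (0 : ℝ) 1, min 1 (x ^ a) = 1 := by
    rw [setIntegral_congr_fun measurableSet_Ioc (eqOn_min_one_rpow_Ioc (by linarith))]
    simp
  have tail : ∫ x in Ioi (1 : ℝ), min 1 (x ^ a) = -1 / (a + 1) := by
    rw [setIntegral_congr_fun measurableSet_Ioi (eqOn_min_one_rpow_Ioi (by linarith)),
      integral_Ioi_rpow_of_lt ha one_pos, one_rpow]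
  rw [← Ioc_union_Ioi_eq_Ioi zero_le_one,
    setIntegral_union (Ioc_disjoint_Ioi le_rfl) measurableSet_Ioi
      (integrableOn_Ioc_min_one_rpow a 1) (integrableOn_Ioi_one_min_one_rpow ha), head, tail]
  have : a + 1 ≠ 0 := by linarith
  field_simp
  ring

theorem integral_Ioc_min_one_rpow_sub_one_le (hb : 0 < b) (hT : 0 ≤ T) :
    ∫ x in Ioc 0 T, min 1 (x ^ (b - 1)) ≤ T ^ b / b := by
  have hint : IntegrableOn (fun x : ℝ ↦ x ^ (b - 1)) (Ioc 0 T) :=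
    (intervalIntegrable_iff_integrableOn_Ioc_of_le hT).1
      (intervalIntegral.intervalIntegrable_rpow' (by linarith))
  calc ∫ x in Ioc 0 T, min 1 (x ^ (b - 1))
      ≤ ∫ x in Ioc 0 T, x ^ (b - 1) :=
        setIntegral_mono (integrableOn_Ioc_min_one_rpow _ T) hint fun _ ↦ min_le_right _ _
    _ = T ^ b / b := by
        rw [← intervalIntegral.integral_of_le hT, integral_rpow (Or.inl (by linarith))]
        simp [zero_rpow hb.ne']

end TruncatedPower

theorem integrableOn_prod_mul_mul {α β γ R : Type*} [MeasurableSpace α] [MeasurableSpace β]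
    [MeasurableSpace γ] [NormedRing R] {μ : Measure α} {ν : Measure β} {ρ : Measure γ} [SFinite μ]
    [SFinite ν] [SFinite ρ] {f : α → R} {g : β → R} {h : γ → R} {A : Set α} {B : Set β} {C : Set γ}
    (hf : IntegrableOn f A μ) (hg : IntegrableOn g B ν) (hh : IntegrableOn h C ρ) :
    IntegrableOn (fun p : α × β × γ ↦ f p.1 * (g p.2.1 * h p.2.2)) (A ×ˢ B ×ˢ C)
      (μ.prod (ν.prod ρ)) := by
  rw [IntegrableOn, ← Measure.prod_restrict, ← Measure.prod_restrict]
  exact Integrable.mul_prod (g := fun q : β × γ ↦ g q.1 * h q.2) hf (Integrable.mul_prod hg hh)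

section GapCoordinates

variable {G α : Type*} [AddGroup G] [MeasurableSpace G] [MeasurableSpace α] [MeasurableAdd₂ G]
  [MeasurableNeg G]

/-- The change of variables `(r, s, t) ↦ (r, s, t - r)`, which replaces the last coordinate of a
triple by its displacement from the first. -/
def gapCoords : G × α × G ≃ᵐ G × α × G where
  toFun p := (p.1, p.2.1, p.2.2 - p.1)
  invFun p := (p.1, p.2.1, p.2.2 + p.1)
  left_inv p := by simp
  right_inv p := by simp
  measurable_toFun := by dsimp only [Equiv.coe_fn_mk]; fun_prop
  measurable_invFun := by dsimp only [Equiv.coe_fn_symm_mk]; fun_prop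

variable {μ ρ : Measure G} {ν : Measure α} [SFinite μ] [SFinite ν] [SFinite ρ]
  [ρ.IsAddRightInvariant]

theorem measurePreserving_gapCoords :
    MeasurePreserving (gapCoords (G := G) (α := α)) (μ.prod (ν.prod ρ)) (μ.prod (ν.prod ρ)) :=
  (MeasurePreserving.id μ).skew_product (g := fun r (q : α × G) ↦ (q.1, q.2 - r)) (by fun_prop) <|
    .of_forall fun r ↦ ((MeasurePreserving.id ν).prod (measurePreserving_sub_right ρ r)).map_eq

theorem integrableOn_mul_mul_comp_sub {R : Type*} [NormedRing R] {f h : G → R} {g : α → R}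
    {A C : Set G} {B : Set α} (hf : IntegrableOn f A μ) (hg : IntegrableOn g B ν)
    (hh : IntegrableOn h C ρ) :
    IntegrableOn (fun p : G × α × G ↦ f p.1 * g p.2.1 * h (p.2.2 - p.1))
      (gapCoords ⁻¹' (A ×ˢ B ×ˢ C)) (μ.prod (ν.prod ρ)) := by
  simp only [mul_assoc]
  exact (measurePreserving_gapCoords.integrableOn_comp_preimage
    gapCoords.measurableEmbedding).2 (integrableOn_prod_mul_mul hf hg hh)

theorem setIntegral_mul_mul_comp_sub {𝕜 : Type*} [RCLike 𝕜] (f h : G → 𝕜) (g : α → 𝕜)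
    (A C : Set G) (B : Set α) :
    ∫ p in gapCoords ⁻¹' (A ×ˢ B ×ˢ C), f p.1 * g p.2.1 * h (p.2.2 - p.1) ∂μ.prod (ν.prod ρ) =
      (∫ x in A, f x ∂μ) * (∫ y in B, g y ∂ν) * ∫ z in C, h z ∂ρ := by
  simp only [mul_assoc]
  calc ∫ p in gapCoords ⁻¹' (A ×ˢ B ×ˢ C), f p.1 * (g p.2.1 * h (p.2.2 - p.1)) ∂μ.prod (ν.prod ρ)
      = ∫ p in A ×ˢ B ×ˢ C, f p.1 * (g p.2.1 * h p.2.2) ∂μ.prod (ν.prod ρ) :=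
        measurePreserving_gapCoords.setIntegral_preimage_emb gapCoords.measurableEmbedding
          (fun p : G × α × G ↦ f p.1 * (g p.2.1 * h p.2.2)) _
    _ = (∫ x in A, f x ∂μ) * ((∫ y in B, g y ∂ν) * ∫ z in C, h z ∂ρ) := by
        rw [setIntegral_prod_mul f (fun q : α × G ↦ g q.1 * h q.2), setIntegral_prod_mul]

end GapCoordinates

section OrderedSimplex

/-- The open ordered simplex `0 < r < s < t < T`, the domain of integration of the theorem. -/
def orderedSimplex (T : ℝ) : Set (ℝ × ℝ × ℝ) :=
  {p | 0 < p.1 ∧ p.1 < p.2.1 ∧ p.2.1 < p.2.2 ∧ p.2.2 < T}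

variable {f g h : ℝ → ℝ} {T : ℝ}

theorem orderedSimplex_subset_preimage_gapCoords (T : ℝ) :
    orderedSimplex T ⊆ gapCoords ⁻¹' (Ioi 0 ×ˢ Ioi 0 ×ˢ Ioc 0 T) := by
  rintro ⟨r, s, t⟩ ⟨hr, hrs, hst, htT⟩
  dsimp only at hr hrs hst htT
  have gap_le : t - r ≤ T := by linarith
  exact ⟨hr, hr.trans hrs, sub_pos.2 (hrs.trans hst), gap_le⟩

theorem integrableOn_orderedSimplex (hf : IntegrableOn f (Ioi 0)) (hg : IntegrableOn g (Ioi 0))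
    (hh : IntegrableOn h (Ioc 0 T)) :
    IntegrableOn (fun p : ℝ × ℝ × ℝ ↦ f p.1 * g p.2.1 * h (p.2.2 - p.1)) (orderedSimplex T) :=
  (integrableOn_mul_mul_comp_sub hf hg hh).mono_set (orderedSimplex_subset_preimage_gapCoords T)

theorem setIntegral_orderedSimplex_le (hf : IntegrableOn f (Ioi 0)) (hg : IntegrableOn g (Ioi 0))
    (hh : IntegrableOn h (Ioc 0 T)) (hf0 : ∀ x ∈ Ioi 0, 0 ≤ f x) (hg0 : ∀ x ∈ Ioi 0, 0 ≤ g x)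
    (hh0 : ∀ x ∈ Ioc 0 T, 0 ≤ h x) :
    ∫ p in orderedSimplex T, f p.1 * g p.2.1 * h (p.2.2 - p.1) ≤
      (∫ x in Ioi 0, f x) * (∫ x in Ioi 0, g x) * ∫ x in Ioc 0 T, h x := by
  have hbox : MeasurableSet (gapCoords ⁻¹' ((Ioi 0 : Set ℝ) ×ˢ (Ioi 0 : Set ℝ) ×ˢ Ioc 0 T)) :=
    gapCoords.measurable (measurableSet_Ioi.prod (measurableSet_Ioi.prod measurableSet_Ioc))
  calc ∫ p in orderedSimplex T, f p.1 * g p.2.1 * h (p.2.2 - p.1)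
      ≤ ∫ p in gapCoords ⁻¹' (Ioi 0 ×ˢ Ioi 0 ×ˢ Ioc 0 T), f p.1 * g p.2.1 * h (p.2.2 - p.1) := by
        refine setIntegral_mono_set (integrableOn_mul_mul_comp_sub hf hg hh) ?_
          (orderedSimplex_subset_preimage_gapCoords T).eventuallyLE
        filter_upwards [ae_restrict_mem hbox] with p ⟨hr, hs, hu⟩
        exact mul_nonneg (mul_nonneg (hf0 _ hr) (hg0 _ hs)) (hh0 _ hu)
    _ = (∫ x in Ioi 0, f x) * (∫ x in Ioi 0, g x) * ∫ x in Ioc 0 T, h x :=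
        setIntegral_mul_mul_comp_sub f h g _ _ _

end OrderedSimplex

theorem third_cumulant_simplex_bound_general {a b c T : ℝ} (ha : a < -1) (hb : b < -1) (hc : 0 < c)
    (hT : 0 ≤ T) :
    IntegrableOn (fun p : ℝ × ℝ × ℝ ↦
        min 1 (p.1 ^ a) * min 1 (p.2.1 ^ b) * min 1 ((p.2.2 - p.1) ^ (c - 1))) (orderedSimplex T) ∧
      ∫ p in orderedSimplex T,
        min 1 (p.1 ^ a) * min 1 (p.2.1 ^ b) * min 1 ((p.2.2 - p.1) ^ (c - 1)) ≤
          a / (a + 1) * (b / (b + 1)) / c * T ^ c := by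
  have hf := integrableOn_Ioi_min_one_rpow ha
  have hg := integrableOn_Ioi_min_one_rpow hb
  have hh := integrableOn_Ioc_min_one_rpow (c - 1) T
  have hpos : 0 ≤ a / (a + 1) * (b / (b + 1)) :=
    mul_nonneg (div_nonneg_of_nonpos (by linarith) (by linarith))
      (div_nonneg_of_nonpos (by linarith) (by linarith))
  refine ⟨integrableOn_orderedSimplex (h := fun u ↦ min 1 (u ^ (c - 1))) hf hg hh, ?_⟩
  calc ∫ p in orderedSimplex T,
        min 1 (p.1 ^ a) * min 1 (p.2.1 ^ b) * min 1 ((p.2.2 - p.1) ^ (c - 1))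
      ≤ (∫ r in Ioi (0 : ℝ), min 1 (r ^ a)) * (∫ s in Ioi (0 : ℝ), min 1 (s ^ b)) *
          ∫ u in Ioc 0 T, min 1 (u ^ (c - 1)) :=
        setIntegral_orderedSimplex_le (h := fun u ↦ min 1 (u ^ (c - 1))) hf hg hh
          (fun _ ↦ min_one_rpow_nonneg a) (fun _ ↦ min_one_rpow_nonneg b)
          fun _ hu ↦ min_one_rpow_nonneg _ hu.1
    _ ≤ a / (a + 1) * (b / (b + 1)) * (T ^ c / c) := by
        rw [integral_Ioi_min_one_rpow ha, integral_Ioi_min_one_rpow hb]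
        exact mul_le_mul_of_nonneg_left (integral_Ioc_min_one_rpow_sub_one_le hc hT) hpos
    _ = a / (a + 1) * (b / (b + 1)) / c * T ^ c := by ring

/-- For `H ∈ (0,1/2)` there is `C > 0` (depending only on `H`) such that for all `T ≥ 1`,
`∫∫∫_{0<r<s<t<T} min(1,r^{2H-2}) min(1,s^{2H-2}) min(1,(t-r)^{H-1}) dr ds dt ≤ C ⬝ T^H`. -/
theorem third_cumulant_simplex_bound (H : ℝ) (hH : H ∈ Set.Ioo (0 : ℝ) (1/2)) :
    ∃ C : ℝ, 0 < C ∧ ∀ T : ℝ, 1 ≤ T →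
      (∫ p in {p : ℝ × ℝ × ℝ | 0 < p.1 ∧ p.1 < p.2.1 ∧ p.2.1 < p.2.2 ∧ p.2.2 < T},
        min 1 (p.1 ^ (2 * H - 2)) * min 1 (p.2.1 ^ (2 * H - 2))
          * min 1 ((p.2.2 - p.1) ^ (H - 1))) ≤ C * T ^ H := by
  obtain ⟨hH0, hH1⟩ := hH
  have ha : 2 * H - 2 < -1 := by linarith
  have hmass : 0 < (2 * H - 2) / (2 * H - 2 + 1) :=
    div_pos_of_neg_of_neg (by linarith) (by linarith)
  exact ⟨_, div_pos (mul_pos hmass hmass) hH0, fun T hT ↦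
    (third_cumulant_simplex_bound_general ha ha hH0 (by linarith)).2⟩
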